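/- Let q be a real number that is transcendental over ℚ, and let α be a real number with 2α³ + 3α² − 4q²·α − 1 = 0. Then there is no finite tower of subfields ℚ(q) = K₀ ⊆ K₁ ⊆ ⋯ ⊆ Kₙ of ℝ such that [Kᵢ : Kᵢ₋₁] = 2 for every i = 1, …, n and α ∈ Kₙ. -/

import Mathlib

set_option autoImplicit false
set_option synthInstance.maxHeartbeats 400000

open Polynomial in
theorem not_isCoprime_of_cubic_eq_zero {r s : ℚ[X]}
    (h : 2 * r ^ 3 + 3 * r ^ 2 * s - 4 * X ^ 2 * r * s ^ 2 - s ^ 3 = 0) : ¬ IsCoprime r s := by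
  intro hc
  have hr : IsUnit r := (hc.pow_right (n := 3)).isUnit_of_dvd
    ⟨2 * r ^ 2 + 3 * r * s - 4 * X ^ 2 * s ^ 2, by linear_combination -h⟩
  have hs : IsUnit s := by
    have h2 : IsUnit (2 : ℚ[X]) :=
      (isUnit_C (R := ℚ) (x := 2)).2 (by norm_num)
    have hd : s ∣ 2 * r ^ 3 :=
      ⟨s ^ 2 + 4 * X ^ 2 * r * s - 3 * r ^ 2, by linear_combination h⟩
    exact (hc.symm.pow_right (n := 3)).isUnit_of_dvd (h2.dvd_mul_left.1 hd)
  obtain ⟨a, ha, rfl⟩ := Polynomial.isUnit_iff.1 hr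
  obtain ⟨b, hb, rfl⟩ := Polynomial.isUnit_iff.1 hs
  have h0 := congrArg (eval 0) h
  have h1 := congrArg (eval 1) h
  simp at h0 h1
  have : a * b ^ 2 = 0 := by linear_combination (h0 - h1) / 4
  simp [ha.ne_zero, hb.ne_zero] at this

theorem EuclideanDomain.exists_eq_mul_isCoprime {R : Type*} [EuclideanDomain R] [DecidableEq R]
    (r : R) {s : R} (hs : s ≠ 0) :
    ∃ g r' s' : R, g ≠ 0 ∧ r = g * r' ∧ s = g * s' ∧ IsCoprime r' s' := by
  obtain ⟨r', hr'⟩ := EuclideanDomain.gcd_dvd_left r s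
  obtain ⟨s', hs'⟩ := EuclideanDomain.gcd_dvd_right r s
  have hg : EuclideanDomain.gcd r s ≠ 0 := fun h0 ↦ hs (EuclideanDomain.gcd_eq_zero_iff.1 h0).2
  refine ⟨_, r', s', hg, hr', hs', EuclideanDomain.gcdA r s, EuclideanDomain.gcdB r s, ?_⟩
  apply mul_left_cancel₀ hg
  linear_combination -EuclideanDomain.gcd_eq_gcd_ab r s -
    EuclideanDomain.gcdA r s * hr' - EuclideanDomain.gcdB r s * hs'

open Polynomial IntermediateField in
theorem cubic_ne_zero_of_mem_adjoin {q x : ℝ} (hq : Transcendental ℚ q) (hx : x ∈ ℚ⟮q⟯) :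
    2 * x ^ 3 + 3 * x ^ 2 - 4 * q ^ 2 * x - 1 ≠ 0 := by
  intro h
  obtain ⟨r, s, rfl⟩ := (mem_adjoin_simple_iff ℚ x).1 hx
  rcases eq_or_ne s 0 with rfl | hs
  · simp at h
  obtain ⟨g, r', s', hg, rfl, rfl, hc⟩ := EuclideanDomain.exists_eq_mul_isCoprime r hs
  have hinj : Function.Injective (aeval (R := ℚ) q) := transcendental_iff_injective.1 hq
  have hne : ∀ p : ℚ[X], p ≠ 0 → aeval q p ≠ 0 := fun p hp ↦
    (map_ne_zero_iff _ hinj).2 hp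
  have hgq := hne g hg
  have hsq := hne s' (right_ne_zero_of_mul hs)
  refine not_isCoprime_of_cubic_eq_zero (hinj ?_) hc
  rw [map_mul, map_mul, mul_div_mul_left _ _ hgq] at h
  field_simp at h
  simp only [map_sub, map_add, map_mul, map_pow, aeval_X, map_ofNat, map_zero]
  linear_combination h

theorem Subfield.relfinrank_eq_finrank_inclusion {L : Type*} [Field L] {A B : Subfield L}
    (h : A ≤ B) :
    letI : Algebra A B := (Subfield.inclusion h).toAlgebra
    A.relfinrank B = Module.finrank A B := by
  let : Algebra A B := (Subfield.inclusion h).toAlgebra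
  rw [Subfield.relfinrank_eq_finrank_of_le h]
  exact Algebra.finrank_eq_of_equiv_equiv (RingEquiv.refl A)
    (RingEquiv.refl B : Subfield.extendScalars h ≃+* B) rfl

theorem Subfield.relfinrank_tower_eq_two_pow {L : Type*} [Field L] (n : ℕ)
    (K : Fin (n + 1) → Subfield L) (hle : ∀ i : Fin n, K i.castSucc ≤ K i.succ)
    (h : ∀ i : Fin n, (K i.castSucc).relfinrank (K i.succ) = 2) (i : Fin (n + 1)) :
    K 0 ≤ K i ∧ (K 0).relfinrank (K i) = 2 ^ (i : ℕ) := by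
  induction i using Fin.induction with
  | zero => simp
  | succ i ih =>
    refine ⟨ih.1.trans (hle i), ?_⟩
    rw [← Subfield.relfinrank_mul_relfinrank ih.1 (hle i), ih.2, h i]
    simp [pow_succ]

open Polynomial in
theorem Subfield.natDegree_dvd_relfinrank {L : Type*} [Field L] {A B : Subfield L} (h : A ≤ B)
    {p : A[X]} (hp : Irreducible p) {x : L} (hx : x ∈ B) (hpx : aeval x p = 0) :
    p.natDegree ∣ A.relfinrank B := by
  have hpx' : aeval (⟨x, hx⟩ : Subfield.extendScalars h) p = 0 :=
    (aeval_algebraMap_eq_zero_iff L (⟨x, hx⟩ : Subfield.extendScalars h) p).1 hpx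
  have hmin := minpoly.eq_of_irreducible hp hpx'
  have hdeg : (minpoly A (⟨x, hx⟩ : Subfield.extendScalars h)).natDegree = p.natDegree := by
    rw [← hmin, natDegree_mul_C (inv_ne_zero (leadingCoeff_ne_zero.2 hp.ne_zero))]
  rw [Subfield.relfinrank_eq_finrank_of_le h, ← hdeg]
  exact minpoly.degree_dvd (IsAlgebraic.isIntegral ⟨p, hp.ne_zero, hpx'⟩)

open Polynomial in
theorem Subfield.three_dvd_relfinrank_of_cubic_eq_zero {q x : ℝ} {A B : Subfield ℝ} (h : A ≤ B)
    (hq : q ∈ A) (hA : ∀ y ∈ A, 2 * y ^ 3 + 3 * y ^ 2 - 4 * q ^ 2 * y - 1 ≠ 0) (hx : x ∈ B)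
    (hcubic : 2 * x ^ 3 + 3 * x ^ 2 - 4 * q ^ 2 * x - 1 = 0) : 3 ∣ A.relfinrank B := by
  let t : A := ⟨q, hq⟩
  let p : A[X] := C 2 * X ^ 3 + C 3 * X ^ 2 + C (-4 * t ^ 2) * X + C (-1)
  have c2 : ((2 : A) : ℝ) = 2 := rfl
  have c3 : ((3 : A) : ℝ) = 3 := rfl
  have c4 : ((4 : A) : ℝ) = 4 := rfl
  have hdeg : p.natDegree = 3 := natDegree_cubic two_ne_zero
  have hirr : Irreducible p := by
    rw [irreducible_iff_roots_eq_zero_of_degree_le_three (by simp [hdeg]) (by simp [hdeg])]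
    refine Multiset.eq_zero_of_forall_notMem fun y hy ↦ hA y y.2 ?_
    have hroot := congrArg (Subtype.val) (isRoot_of_mem_roots hy : eval y p = 0)
    simp [p, t, c2, c3, c4] at hroot
    linear_combination hroot
  rw [← hdeg]
  refine Subfield.natDegree_dvd_relfinrank h hirr hx ?_
  simp [p, t, c2, c3, c4, Algebra.algebraMap_eq_smul_one, Subfield.smul_def]
  linear_combination hcubic

open IntermediateField in
theorem stmt_10 (q α : ℝ) (hq : Transcendental ℚ q)
    (hα : 2 * α ^ 3 + 3 * α ^ 2 - 4 * q ^ 2 * α - 1 = 0) :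
    ¬ ∃ (n : ℕ) (K : Fin (n + 1) → Subfield ℝ)
        (hle : ∀ i : Fin n, K i.castSucc ≤ K i.succ),
      K 0 = (ℚ⟮q⟯ : IntermediateField ℚ ℝ).toSubfield ∧
      (∀ i : Fin n,
        letI : Algebra (K i.castSucc) (K i.succ) :=
          (Subfield.inclusion (hle i)).toAlgebra
        Module.finrank (K i.castSucc) (K i.succ) = 2) ∧
      α ∈ K (Fin.last n) := by
  rintro ⟨n, K, hle, h0, h2, hmem⟩
  have hrel : ∀ i : Fin n, (K i.castSucc).relfinrank (K i.succ) = 2 := fun i ↦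
    (Subfield.relfinrank_eq_finrank_inclusion (hle i)).trans (h2 i)
  obtain ⟨hbot, hpow⟩ := Subfield.relfinrank_tower_eq_two_pow n K hle hrel (Fin.last n)
  have hq0 : q ∈ K 0 := h0 ▸ mem_adjoin_simple_self ℚ q
  have hroots : ∀ y ∈ K 0, 2 * y ^ 3 + 3 * y ^ 2 - 4 * q ^ 2 * y - 1 ≠ 0 := fun y hy ↦
    cubic_ne_zero_of_mem_adjoin hq (by rwa [h0] at hy)
  have h3 := Subfield.three_dvd_relfinrank_of_cubic_eq_zero hbot hq0 hroots hmem hα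
  rw [hpow] at h3
  exact absurd (Nat.prime_three.dvd_of_dvd_pow h3) (by norm_num)
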